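/- arXiv:1511.08041 — 2 statements merged into one kernel-verified Lean document; each statement's English description precedes it below -/
import Mathlib

section
/- Let α > 0, n ≥ 1, and 1 ≤ p ≤ ∞. There exists a constant C > 0, depending only on n, α and p, such that for every t > 0: Σ_{k∈ℤⁿ} ‖I(t,·)‖_{L^p(C(k))} ≤ C ( 1 + t^{-(n/(2α))(1 - 1/p)} ). -/
open Real MeasureTheory ENNReal
open scoped Classical

/-- `I(t,x) = min(t·|x|^{-(n+2α)}, t^{-n/(2α)})`  (with the convention that at `x = 0` only the
second, finite, term is kept, since `|0|^{-(n+2α)} = +∞`). -/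
noncomputable def Ifun (n : ℕ) (α : ℝ) (t : ℝ) (x : EuclideanSpace ℝ (Fin n)) : ℝ :=
  if x = 0 then t ^ (-(n : ℝ) / (2 * α))
  else min (t * ‖x‖ ^ (-((n : ℝ) + 2 * α))) (t ^ (-(n : ℝ) / (2 * α)))

/-- The unit cube `C(k)` in `ℝⁿ` centered at `k ∈ ℤⁿ`. -/
def unitCube (n : ℕ) (k : Fin n → ℤ) : Set (EuclideanSpace ℝ (Fin n)) :=
  {x | ∀ i, |x i - (k i : ℝ)| ≤ 1 / 2}

/-!
Two features of `I` make the estimate uniform in `t`. The scaling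
`I(t, x) = t^{-n/(2α)} I(1, t^{-1/(2α)} x)` shows that the mass `∫ I(t, ·)` does not depend on `t`.
The Harnack-type inequality `I(t, x) ≤ c^{n+2α} I(t, y)` for `|y| ≤ c|x|`, whose constant does not
see `t`, bounds the supremum of `I(t, ·)` over a cube `C(k)` with `k ≠ 0` by its integral over that
cube, so these cubes together contribute a constant times the mass. On the remaining cube `C(0)`,
interpolate between `‖I(t, ·)‖_∞ = t^{-n/(2α)}` and the mass or, for `p < 1`, compare with the
`L¹` norm.
-/

lemma one_div_toReal_le_one {p : ℝ≥0∞} (hp : 1 ≤ p) : 1 / p.toReal ≤ 1 := by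
  simpa using ENNReal.toReal_mono ENNReal.one_ne_top (ENNReal.inv_le_one.2 hp)

section Lebesgue

variable {X E : Type*} [MeasurableSpace X] {μ : Measure X} [NormedAddCommGroup E] {f : X → E}
  {p : ℝ≥0∞}

lemma eLpNorm_le_eLpNorm_top_rpow_mul_eLpNorm_one_rpow (hf : AEStronglyMeasurable f μ)
    (hp : 1 ≤ p) :
    eLpNorm f p μ ≤
      eLpNorm f ∞ μ ^ (1 - 1 / p.toReal) * eLpNorm f 1 μ ^ (1 / p.toReal) := by
  rcases eq_or_ne p ∞ with rfl | hp_top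
  · simp
  have hq : 1 ≤ p.toReal := by simpa using ENNReal.toReal_mono hp_top hp
  set q := p.toReal
  set M := eLpNorm f ∞ μ with hM
  have pow_le : ∀ᵐ x ∂μ, ‖f x‖ₑ ^ q ≤ M ^ (q - 1) * ‖f x‖ₑ := by
    filter_upwards [ae_le_eLpNormEssSup (f := f) (μ := μ)] with x hx
    calc ‖f x‖ₑ ^ q = ‖f x‖ₑ ^ (q - 1) * ‖f x‖ₑ := by
          simpa using ENNReal.rpow_add_of_nonneg (x := ‖f x‖ₑ) _ _ (sub_nonneg.2 hq) zero_le_one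
      _ ≤ M ^ (q - 1) * ‖f x‖ₑ := by
          rw [hM, eLpNorm_exponent_top]
          gcongr
  calc eLpNorm f p μ = (∫⁻ x, ‖f x‖ₑ ^ q ∂μ) ^ (1 / q) :=
        eLpNorm_eq_lintegral_rpow_enorm_toReal (one_pos.trans_le hp).ne' hp_top
    _ ≤ (∫⁻ x, M ^ (q - 1) * ‖f x‖ₑ ∂μ) ^ (1 / q) :=
        ENNReal.rpow_le_rpow (lintegral_mono_ae pow_le) (by positivity)
    _ = (M ^ (q - 1) * eLpNorm f 1 μ) ^ (1 / q) := by
        rw [lintegral_const_mul'' _ hf.enorm, eLpNorm_one_eq_lintegral_enorm]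
    _ = M ^ (1 - 1 / q) * eLpNorm f 1 μ ^ (1 / q) := by
        rw [ENNReal.mul_rpow_of_nonneg _ _ (by positivity), ← ENNReal.rpow_mul, sub_mul,
          mul_one_div_cancel (by positivity), _root_.one_mul]

lemma eLpNorm_le_mul_eLpNorm_one_of_ae_le_mul [IsProbabilityMeasure μ] {c : NNReal}
    (hf : AEStronglyMeasurable f μ) (hc : ∀ᵐ x ∂μ, ∀ᵐ y ∂μ, ‖f x‖ ≤ c * ‖f y‖) :
    eLpNorm f p μ ≤ c * eLpNorm f 1 μ := by
  have le_average : ∀ᵐ x ∂μ, ‖f x‖ₑ ≤ c * eLpNorm f 1 μ := by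
    filter_upwards [hc] with x hx
    calc ‖f x‖ₑ = ∫⁻ _, ‖f x‖ₑ ∂μ := by simp
      _ ≤ ∫⁻ y, c * ‖f y‖ₑ ∂μ := by
          refine lintegral_mono_ae (hx.mono fun y hxy => ?_)
          simp only [enorm_eq_nnnorm]
          exact_mod_cast hxy
      _ = c * eLpNorm f 1 μ := by
          rw [lintegral_const_mul'' _ hf.enorm, eLpNorm_one_eq_lintegral_enorm]
  simpa using eLpNorm_le_of_ae_enorm_bound (p := p) le_average

lemma tsum_eLpNorm_one_restrict_le {ι : Type*} [Countable ι] {s : ι → Set X}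
    (hs : ∀ i, NullMeasurableSet (s i) μ) (hd : Pairwise (Function.onFun (AEDisjoint μ) s)) :
    ∑' i, eLpNorm f 1 (μ.restrict (s i)) ≤ eLpNorm f 1 μ := by
  simp only [eLpNorm_one_eq_lintegral_enorm]
  rw [← lintegral_iUnion₀ hs hd]
  exact setLIntegral_le_lintegral _ _

end Lebesgue

section UnitCube

variable {n : ℕ} {k l : Fin n → ℤ} {x y : EuclideanSpace ℝ (Fin n)}

lemma unitCube_eq_preimage_closedBall (n : ℕ) (k : Fin n → ℤ) :
    unitCube n k = WithLp.ofLp ⁻¹' Metric.closedBall (fun i => (k i : ℝ)) (1 / 2) := by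
  ext x
  simp [unitCube, dist_pi_le_iff, Real.dist_eq]

lemma measurableSet_unitCube (n : ℕ) (k : Fin n → ℤ) : MeasurableSet (unitCube n k) := by
  rw [unitCube_eq_preimage_closedBall]
  exact (PiLp.volume_preserving_ofLp (Fin n)).measurable measurableSet_closedBall

lemma volume_unitCube (n : ℕ) (k : Fin n → ℤ) : volume (unitCube n k) = 1 := by
  rw [unitCube_eq_preimage_closedBall, (PiLp.volume_preserving_ofLp (Fin n)).measure_preimage
    measurableSet_closedBall.nullMeasurableSet, Real.volume_pi_closedBall _ (by norm_num)]
  norm_num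

instance isProbabilityMeasure_restrict_unitCube (n : ℕ) (k : Fin n → ℤ) :
    IsProbabilityMeasure (volume.restrict (unitCube n k)) :=
  ⟨by rw [Measure.restrict_apply_univ, volume_unitCube]⟩

lemma pairwise_aedisjoint_unitCube (n : ℕ) :
    Pairwise (Function.onFun (AEDisjoint volume) (unitCube n)) := by
  intro k l hkl
  obtain ⟨i, hi⟩ := Function.ne_iff.1 hkl
  -- Two distinct cubes can only meet in a hyperplane `x i = const`.
  have inter_subset : unitCube n k ∩ unitCube n l ⊆
      WithLp.ofLp ⁻¹' {x | x i = ((k i : ℝ) + l i) / 2} := by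
    rintro x ⟨hxk, hxl⟩
    have hk := abs_le.1 (hxk i)
    have hl := abs_le.1 (hxl i)
    change x i = ((k i : ℝ) + l i) / 2
    rcases lt_or_gt_of_ne hi with h | h
    · have : (k i : ℝ) + 1 ≤ l i := by exact_mod_cast h
      linarith
    · have : (l i : ℝ) + 1 ≤ k i := by exact_mod_cast h
      linarith
  exact measure_mono_null inter_subset <|
    (PiLp.volume_preserving_ofLp (Fin n)).quasiMeasurePreserving.preimage_null
      (Measure.pi_hyperplane _ i _)

lemma dist_le_sqrt_of_mem_unitCube (hx : x ∈ unitCube n k) (hy : y ∈ unitCube n k) :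
    dist x y ≤ √n := by
  rw [unitCube_eq_preimage_closedBall, Set.mem_preimage, Metric.mem_closedBall] at hx hy
  have sup_dist : dist x.ofLp y.ofLp ≤ 1 := by
    linarith [dist_triangle_right x.ofLp y.ofLp fun i => (k i : ℝ)]
  calc dist x y ≤ √n * dist x.ofLp y.ofLp := by
        simpa [Real.sqrt_eq_rpow] using
          (PiLp.antilipschitzWith_ofLp 2 fun _ : Fin n => ℝ).le_mul_dist x y
    _ ≤ √n := mul_le_of_le_one_right (Real.sqrt_nonneg _) sup_dist

lemma half_le_norm_of_mem_unitCube (hk : k ≠ 0) (hx : x ∈ unitCube n k) : 1 / 2 ≤ ‖x‖ := by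
  obtain ⟨i, hi⟩ := Function.ne_iff.1 hk
  have one_le : (1 : ℝ) ≤ |(k i : ℝ)| := by exact_mod_cast Int.one_le_abs hi
  have hxi : |x i - k i| ≤ 1 / 2 := hx i
  have coord_le : |x i| ≤ ‖x‖ := PiLp.norm_apply_le x i
  linarith [abs_sub_abs_le_abs_sub (k i : ℝ) (x i), abs_sub_comm (k i : ℝ) (x i)]

lemma norm_le_mul_norm_of_mem_unitCube (hk : k ≠ 0) (hx : x ∈ unitCube n k)
    (hy : y ∈ unitCube n k) : ‖y‖ ≤ (1 + 2 * √n) * ‖x‖ := by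
  have dist_le := dist_le_sqrt_of_mem_unitCube hy hx
  rw [dist_eq_norm] at dist_le
  have half_le := half_le_norm_of_mem_unitCube hk hx
  nlinarith [norm_le_norm_add_norm_sub' y x, Real.sqrt_nonneg (n : ℝ)]

end UnitCube

section Ifun

variable {n : ℕ} {α t : ℝ} {x y : EuclideanSpace ℝ (Fin n)}

lemma Ifun_nonneg (ht : 0 ≤ t) (x : EuclideanSpace ℝ (Fin n)) : 0 ≤ Ifun n α t x := by
  unfold Ifun
  split_ifs <;> positivity

lemma Ifun_le (n : ℕ) (α t : ℝ) (x : EuclideanSpace ℝ (Fin n)) :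
    Ifun n α t x ≤ t ^ (-(n : ℝ) / (2 * α)) := by
  unfold Ifun
  split_ifs
  · exact le_rfl
  · exact min_le_right _ _

lemma measurable_Ifun (n : ℕ) (α t : ℝ) : Measurable (Ifun n α t) :=
  Measurable.ite (measurableSet_singleton 0) measurable_const (by fun_prop)

lemma Ifun_le_rpow_mul_Ifun {c : ℝ} (hα : 0 ≤ α) (ht : 0 ≤ t) (hc : 1 ≤ c)
    (hxy : ‖y‖ ≤ c * ‖x‖) :
    Ifun n α t x ≤ c ^ ((n : ℝ) + 2 * α) * Ifun n α t y := by
  have hs : 0 ≤ (n : ℝ) + 2 * α := by positivity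
  have hc0 : 0 < c := one_pos.trans_le hc
  have height_le : t ^ (-(n : ℝ) / (2 * α)) ≤
      c ^ ((n : ℝ) + 2 * α) * t ^ (-(n : ℝ) / (2 * α)) :=
    le_mul_of_one_le_left (by positivity) (Real.one_le_rpow hc hs)
  rcases eq_or_ne y 0 with rfl | hy
  · calc Ifun n α t x ≤ t ^ (-(n : ℝ) / (2 * α)) := Ifun_le n α t x
      _ ≤ c ^ ((n : ℝ) + 2 * α) * Ifun n α t 0 := by simpa [Ifun] using height_le
  have hx : x ≠ 0 := by
    rintro rfl
    simp_all
  have tail_le : t * ‖x‖ ^ (-((n : ℝ) + 2 * α)) ≤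
      c ^ ((n : ℝ) + 2 * α) * (t * ‖y‖ ^ (-((n : ℝ) + 2 * α))) :=
    calc t * ‖x‖ ^ (-((n : ℝ) + 2 * α))
        = c ^ ((n : ℝ) + 2 * α) * (t * (c * ‖x‖) ^ (-((n : ℝ) + 2 * α))) := by
          rw [Real.mul_rpow hc0.le (norm_nonneg x), Real.rpow_neg hc0.le]
          field_simp
      _ ≤ c ^ ((n : ℝ) + 2 * α) * (t * ‖y‖ ^ (-((n : ℝ) + 2 * α))) := by
          gcongr ?_ * (t * ?_)
          exact Real.rpow_le_rpow_of_nonpos (norm_pos_iff.2 hy) hxy (neg_nonpos.2 hs)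
  rw [Ifun, Ifun, if_neg hx, if_neg hy, mul_min_of_nonneg _ _ (by positivity)]
  exact min_le_min tail_le height_le

lemma Ifun_eq_rpow_mul_Ifun_one (hα : α ≠ 0) (ht : 0 < t) (x : EuclideanSpace ℝ (Fin n)) :
    Ifun n α t x =
      t ^ (-(n : ℝ) / (2 * α)) * Ifun n α 1 (t ^ (-1 / (2 * α)) • x) := by
  have hr : 0 < t ^ (-1 / (2 * α)) := by positivity
  rcases eq_or_ne x 0 with rfl | hx
  · simp [Ifun]
  have tail_eq : t ^ (-(n : ℝ) / (2 * α)) * ‖t ^ (-1 / (2 * α)) • x‖ ^ (-((n : ℝ) + 2 * α)) =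
      t * ‖x‖ ^ (-((n : ℝ) + 2 * α)) := by
    have exponent : -(n : ℝ) / (2 * α) + -1 / (2 * α) * -((n : ℝ) + 2 * α) = 1 := by
      field_simp
      ring
    rw [norm_smul, Real.norm_of_nonneg hr.le, Real.mul_rpow hr.le (norm_nonneg x),
      ← Real.rpow_mul ht.le, ← mul_assoc, ← Real.rpow_add ht, exponent, Real.rpow_one]
  rw [Ifun, Ifun, if_neg hx, if_neg (smul_ne_zero hr.ne' hx), Real.one_rpow, _root_.one_mul,
    mul_min_of_nonneg _ _ (by positivity), tail_eq, _root_.mul_one]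

lemma Ifun_one_le (hα : 0 ≤ α) (x : EuclideanSpace ℝ (Fin n)) :
    Ifun n α 1 x ≤ 2 ^ ((n : ℝ) + 2 * α) * (1 + ‖x‖) ^ (-((n : ℝ) + 2 * α)) := by
  have hs : 0 ≤ (n : ℝ) + 2 * α := by positivity
  have rpow_eq : (2 : ℝ) ^ ((n : ℝ) + 2 * α) * (1 + ‖x‖) ^ (-((n : ℝ) + 2 * α)) =
      ((1 + ‖x‖) / 2) ^ (-((n : ℝ) + 2 * α)) := by
    rw [Real.div_rpow (by positivity) zero_le_two, Real.rpow_neg zero_le_two]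
    field_simp
  rw [rpow_eq]
  rcases le_total ‖x‖ 1 with hx | hx
  · calc Ifun n α 1 x ≤ 1 := by simpa using Ifun_le n α 1 x
      _ ≤ ((1 + ‖x‖) / 2) ^ (-((n : ℝ) + 2 * α)) :=
          Real.one_le_rpow_of_pos_of_le_one_of_nonpos (by positivity) (by linarith)
            (neg_nonpos.2 hs)
  · have hx0 : x ≠ 0 := norm_pos_iff.1 (one_pos.trans_le hx)
    calc Ifun n α 1 x ≤ ‖x‖ ^ (-((n : ℝ) + 2 * α)) := by simp [Ifun, hx0]
      _ ≤ ((1 + ‖x‖) / 2) ^ (-((n : ℝ) + 2 * α)) :=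
          Real.rpow_le_rpow_of_nonpos (by positivity) (by linarith) (neg_nonpos.2 hs)

lemma integrable_Ifun_one (n : ℕ) (hα : 0 < α) : Integrable (Ifun n α 1) := by
  have decay : Integrable fun x : EuclideanSpace ℝ (Fin n) =>
      (1 + ‖x‖) ^ (-((n : ℝ) + 2 * α)) :=
    integrable_one_add_norm (by simpa using hα)
  refine (decay.const_mul (2 ^ ((n : ℝ) + 2 * α))).mono'
    (measurable_Ifun n α 1).aestronglyMeasurable (.of_forall fun x => ?_)
  rw [Real.norm_of_nonneg (Ifun_nonneg zero_le_one x)]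
  exact Ifun_one_le hα.le x

lemma integrable_Ifun (n : ℕ) (hα : 0 < α) (ht : 0 < t) : Integrable (Ifun n α t) := by
  rw [funext (Ifun_eq_rpow_mul_Ifun_one hα.ne' ht)]
  exact ((integrable_Ifun_one n hα).comp_smul (by positivity)).const_mul _

lemma integral_Ifun_eq_integral_Ifun_one (n : ℕ) (hα : α ≠ 0) (ht : 0 < t) :
    ∫ x, Ifun n α t x = ∫ x, Ifun n α 1 x := by
  have jacobian : (t ^ (-1 / (2 * α))) ^ n = t ^ (-(n : ℝ) / (2 * α)) := by
    rw [← Real.rpow_mul_natCast ht.le]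
    congr 1
    ring
  have height_pos : 0 < t ^ (-(n : ℝ) / (2 * α)) := by positivity
  simp_rw [Ifun_eq_rpow_mul_Ifun_one hα ht]
  rw [integral_const_mul, Measure.integral_comp_smul, finrank_euclideanSpace_fin, jacobian,
    abs_of_pos (inv_pos.2 height_pos), smul_eq_mul, mul_inv_cancel_left₀ height_pos.ne']

lemma eLpNorm_one_Ifun (n : ℕ) (hα : 0 < α) (ht : 0 < t) :
    eLpNorm (Ifun n α t) 1 volume = ENNReal.ofReal (∫ x, Ifun n α 1 x) := by
  rw [← integral_Ifun_eq_integral_Ifun_one n hα.ne' ht, eLpNorm_one_eq_lintegral_enorm,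
    ofReal_integral_eq_lintegral_ofReal (integrable_Ifun n hα ht)
      (.of_forall (Ifun_nonneg ht.le))]
  exact lintegral_congr fun x => Real.enorm_of_nonneg (Ifun_nonneg ht.le x)

lemma eLpNorm_top_Ifun_le (n : ℕ) (α : ℝ) (ht : 0 ≤ t) :
    eLpNorm (Ifun n α t) ∞ volume ≤ ENNReal.ofReal (t ^ (-(n : ℝ) / (2 * α))) := by
  rw [eLpNorm_exponent_top]
  refine eLpNormEssSup_le_of_ae_bound (.of_forall fun x => ?_)
  rw [Real.norm_of_nonneg (Ifun_nonneg ht x)]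
  exact Ifun_le n α t x

lemma eLpNorm_Ifun_le {p : ℝ≥0∞} (n : ℕ) (hα : 0 < α) (hp : 1 ≤ p) (ht : 0 < t) :
    eLpNorm (Ifun n α t) p volume ≤
      ENNReal.ofReal (t ^ (-((n : ℝ) / (2 * α)) * (1 - 1 / p.toReal)) *
        (∫ x, Ifun n α 1 x) ^ (1 / p.toReal)) := by
  have inv_le_one := one_div_toReal_le_one hp
  have mass_nonneg : 0 ≤ ∫ x, Ifun n α 1 x := integral_nonneg (Ifun_nonneg zero_le_one)
  calc eLpNorm (Ifun n α t) p volume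
      ≤ eLpNorm (Ifun n α t) ∞ volume ^ (1 - 1 / p.toReal) *
          eLpNorm (Ifun n α t) 1 volume ^ (1 / p.toReal) :=
        eLpNorm_le_eLpNorm_top_rpow_mul_eLpNorm_one_rpow
          (measurable_Ifun n α t).aestronglyMeasurable hp
    _ ≤ ENNReal.ofReal (t ^ (-(n : ℝ) / (2 * α))) ^ (1 - 1 / p.toReal) *
          ENNReal.ofReal (∫ x, Ifun n α 1 x) ^ (1 / p.toReal) := by
        rw [eLpNorm_one_Ifun n hα ht]
        gcongr
        exact eLpNorm_top_Ifun_le n α ht.le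
    _ = _ := by
        rw [ENNReal.ofReal_rpow_of_nonneg (by positivity) (sub_nonneg.2 inv_le_one),
          ENNReal.ofReal_rpow_of_nonneg mass_nonneg (by positivity),
          ← ENNReal.ofReal_mul (by positivity), ← Real.rpow_mul ht.le, neg_div]

lemma eLpNorm_Ifun_restrict_unitCube_le (hα : 0 < α) (ht : 0 < t) (p : ℝ≥0∞)
    (k : Fin n → ℤ) :
    eLpNorm (Ifun n α t) p (volume.restrict (unitCube n k)) ≤
      ENNReal.ofReal (max 1 (∫ x, Ifun n α 1 x) *
        (1 + t ^ (-((n : ℝ) / (2 * α)) * (1 - 1 / p.toReal)))) := by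
  set m := ∫ x, Ifun n α 1 x
  set T := t ^ (-((n : ℝ) / (2 * α)) * (1 - 1 / p.toReal))
  have hT : 0 ≤ T := by positivity
  have hm : 0 ≤ m := integral_nonneg (Ifun_nonneg zero_le_one)
  rcases le_total 1 p with hp | hp
  · have rpow_le_max : m ^ (1 / p.toReal) ≤ max 1 m :=
      (Real.rpow_le_rpow hm (le_max_right 1 m) (by positivity)).trans
        (Real.rpow_le_self_of_one_le (le_max_left 1 m) (one_div_toReal_le_one hp))
    calc _ ≤ eLpNorm (Ifun n α t) p volume := eLpNorm_mono_measure _ Measure.restrict_le_self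
      _ ≤ ENNReal.ofReal (T * m ^ (1 / p.toReal)) := eLpNorm_Ifun_le n hα hp ht
      _ ≤ ENNReal.ofReal (max 1 m * (1 + T)) := by
          rw [mul_comm (max 1 m)]
          gcongr
          linarith
  · calc _ ≤ eLpNorm (Ifun n α t) 1 (volume.restrict (unitCube n k)) :=
          eLpNorm_le_eLpNorm_of_exponent_le hp (measurable_Ifun n α t).aestronglyMeasurable
      _ ≤ eLpNorm (Ifun n α t) 1 volume := eLpNorm_mono_measure _ Measure.restrict_le_self
      _ = ENNReal.ofReal m := eLpNorm_one_Ifun n hα ht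
      _ ≤ ENNReal.ofReal (max 1 m * (1 + T)) := by
          gcongr
          nlinarith [le_max_left 1 m, le_max_right 1 m]

lemma eLpNorm_Ifun_restrict_unitCube_le_mul (hα : 0 ≤ α) (ht : 0 ≤ t) (p : ℝ≥0∞)
    {k : Fin n → ℤ} (hk : k ≠ 0) :
    eLpNorm (Ifun n α t) p (volume.restrict (unitCube n k)) ≤
      ENNReal.ofReal ((1 + 2 * √n) ^ ((n : ℝ) + 2 * α)) *
        eLpNorm (Ifun n α t) 1 (volume.restrict (unitCube n k)) := by
  refine eLpNorm_le_mul_eLpNorm_one_of_ae_le_mul (measurable_Ifun n α t).aestronglyMeasurable ?_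
  filter_upwards [ae_restrict_mem (measurableSet_unitCube n k)] with x hx
  filter_upwards [ae_restrict_mem (measurableSet_unitCube n k)] with y hy
  rw [Real.norm_of_nonneg (Ifun_nonneg ht x), Real.norm_of_nonneg (Ifun_nonneg ht y),
    Real.coe_toNNReal _ (by positivity)]
  exact Ifun_le_rpow_mul_Ifun hα ht (by simp) (norm_le_mul_norm_of_mem_unitCube hk hx hy)

lemma tsum_eLpNorm_Ifun_le (n : ℕ) (hα : 0 < α) (ht : 0 < t) (p : ℝ≥0∞) :
    ∑' k : Fin n → ℤ, eLpNorm (Ifun n α t) p (volume.restrict (unitCube n k)) ≤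
      ENNReal.ofReal
        ((max 1 (∫ x, Ifun n α 1 x) +
            (1 + 2 * √n) ^ ((n : ℝ) + 2 * α) * ∫ x, Ifun n α 1 x) *
          (1 + t ^ (-((n : ℝ) / (2 * α)) * (1 - 1 / p.toReal)))) := by
  set m := ∫ x, Ifun n α 1 x
  set T := t ^ (-((n : ℝ) / (2 * α)) * (1 - 1 / p.toReal))
  set c := (1 + 2 * √n) ^ ((n : ℝ) + 2 * α)
  have hm : 0 ≤ m := integral_nonneg (Ifun_nonneg zero_le_one)
  have hT : 0 ≤ T := by positivity
  have hc : 0 ≤ c := by positivity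
  have term_le (k : Fin n → ℤ) :
      eLpNorm (Ifun n α t) p (volume.restrict (unitCube n k)) ≤
        (if k = 0 then ENNReal.ofReal (max 1 m * (1 + T)) else 0) +
          ENNReal.ofReal c * eLpNorm (Ifun n α t) 1 (volume.restrict (unitCube n k)) := by
    split_ifs with hk
    · exact (eLpNorm_Ifun_restrict_unitCube_le hα ht p k).trans le_self_add
    · simpa using eLpNorm_Ifun_restrict_unitCube_le_mul hα.le ht.le p hk
  calc _ ≤ ∑' k : Fin n → ℤ, _ := ENNReal.tsum_le_tsum term_le
    _ = ENNReal.ofReal (max 1 m * (1 + T)) + ENNReal.ofReal c *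
          ∑' k : Fin n → ℤ, eLpNorm (Ifun n α t) 1 (volume.restrict (unitCube n k)) := by
        rw [ENNReal.tsum_add, tsum_ite_eq, ENNReal.tsum_mul_left]
    _ ≤ ENNReal.ofReal (max 1 m * (1 + T)) + ENNReal.ofReal c * ENNReal.ofReal m := by
        rw [← eLpNorm_one_Ifun n hα ht]
        gcongr
        exact tsum_eLpNorm_one_restrict_le
          (fun k => (measurableSet_unitCube n k).nullMeasurableSet)
          (pairwise_aedisjoint_unitCube n)
    _ ≤ ENNReal.ofReal ((max 1 m + c * m) * (1 + T)) := by
        rw [← ENNReal.ofReal_mul hc, ← ENNReal.ofReal_add (by positivity) (by positivity)]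
        gcongr
        nlinarith [mul_nonneg (mul_nonneg hc hm) hT]

end Ifun

theorem Ifun_amalgam_bound_general (n : ℕ) (α : ℝ) (hα : 0 < α) :
    ∃ C > (0 : ℝ), ∀ p : ℝ≥0∞, p ≠ 0 → ∀ t : ℝ, 0 < t →
      Summable (fun k : Fin n → ℤ =>
        (eLpNorm (fun x => Ifun n α t x) p (volume.restrict (unitCube n k))).toReal) ∧
      ∑' k : Fin n → ℤ,
          (eLpNorm (fun x => Ifun n α t x) p (volume.restrict (unitCube n k))).toReal ≤
        C * (1 + t ^ (-((n : ℝ) / (2 * α)) * (1 - 1 / p.toReal))) := by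
  have mass_nonneg : 0 ≤ ∫ x, Ifun n α 1 x := integral_nonneg (Ifun_nonneg zero_le_one)
  refine ⟨max 1 (∫ x, Ifun n α 1 x) + (1 + 2 * √n) ^ ((n : ℝ) + 2 * α) * ∫ x, Ifun n α 1 x,
    by positivity, fun p _ t ht => ?_⟩
  have tsum_le := tsum_eLpNorm_Ifun_le n hα ht p
  have tsum_ne_top := ne_top_of_le_ne_top ENNReal.ofReal_ne_top tsum_le
  refine ⟨ENNReal.summable_toReal tsum_ne_top, ?_⟩
  rw [← ENNReal.tsum_toReal_eq (ENNReal.ne_top_of_tsum_ne_top tsum_ne_top)]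
  exact ENNReal.toReal_le_of_le_ofReal (by positivity) tsum_le

/-- for `1 ≤ p ≤ ∞` there is `C > 0`, depending only on `n`, `α` and `p`, such
that for every `t > 0`, `Σ_{k∈ℤⁿ} ‖I(t,·)‖_{L^p(C(k))} ≤ C (1 + t^{-(n/(2α))(1-1/p)})`.
(When `p = ∞`, `1 - 1/p.toReal = 1` by the Lean conventions `(∞).toReal = 0`, `1/0 = 0`.) -/
theorem Ifun_amalgam_bound (n : ℕ) (hn : 1 ≤ n) (α : ℝ) (hα : 0 < α)
    (p : ℝ≥0∞) (hp : 1 ≤ p) :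
    ∃ C > (0 : ℝ), ∀ t : ℝ, 0 < t →
      Summable (fun k : Fin n → ℤ =>
        (eLpNorm (fun x => Ifun n α t x) p (volume.restrict (unitCube n k))).toReal) ∧
      ∑' k : Fin n → ℤ,
          (eLpNorm (fun x => Ifun n α t x) p (volume.restrict (unitCube n k))).toReal ≤
        C * (1 + t ^ (-((n : ℝ) / (2 * α)) * (1 - 1 / p.toReal))) := by
  obtain ⟨C, hC, hbound⟩ := Ifun_amalgam_bound_general n α hα
  exact ⟨C, hC, hbound p (one_pos.trans_le hp).ne'⟩
end

section
/- Let m be a positive integer, M ∈ ℝ, and let g be a smooth compactly supported function on ℝ with support contained in (0,∞). For t ∈ ℝ define g_t(μ) = e^{i t (M - 1/μ)} g(μ) for μ ≠ 0, extended by 0. Then for every β with 0 ≤ β < m - 1/2 there exists a constant C > 0, depending on g, m, β and M, such that for all t ∈ ℝ: ∫_ℝ |ĝ_t(s)| (1 + s²)^{β/2} ds ≤ C (1 + t²)^{m/2}, where ĝ_t denotes the Fourier transform of g_t. -/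
open Real MeasureTheory

/-- `g_t(μ) = e^{it(M - 1/μ)} g(μ)` (for `μ ≠ 0`, extended by `0`; since `supp g ⊆ (0,∞)` and
`1/0 = 0` in Lean, the formula below realizes exactly this extension). -/
noncomputable def gtfun (M : ℝ) (g : ℝ → ℂ) (t : ℝ) (μ : ℝ) : ℂ :=
  Complex.exp (Complex.I * (t : ℂ) * ((M : ℂ) - 1 / (μ : ℂ))) * g μ

/-- The Fourier transform `ĝ_t(s) = ∫_ℝ e^{-i s μ} g_t(μ) dμ`. -/
noncomputable def gtHat (M : ℝ) (g : ℝ → ℂ) (t : ℝ) (s : ℝ) : ℂ :=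
  ∫ μ : ℝ, Complex.exp (-(Complex.I * (s : ℂ) * (μ : ℂ))) * gtfun M g t μ

open scoped FourierTransform SchwartzMap ContDiff

/-! The weight `(1 + s ^ 2) ^ ((β - m) / 2)` is square integrable when `β < m - 1 / 2`, so by
Cauchy–Schwarz the weighted `L¹` norm of a Fourier transform is controlled by the `H^m` norm of the
function. Differentiating `e^{itφ} f` gives `e^{itφ} f' + it e^{itφ} φ' f`, whose amplitudes `f'`
and `φ' f` are of the same kind as `f`. Hence every derivative costs at most a factor of order
`(1 + t ^ 2) ^ (1 / 2)`, and the `H^m` norm is `O((1 + t ^ 2) ^ (m / 2))` by induction on `m`. This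
only uses that the phase `φ` is smooth near the support of `f`, as `M - 1 / μ` is away from `0`. -/

section JapaneseBracket

variable {E G : Type*} [NormedAddCommGroup E] [NormedAddCommGroup G] {F : E → G}

lemma norm_mul_one_add_norm_sq_rpow_eq (m β : ℝ) (x : E) :
    ‖F x‖ * (1 + ‖x‖ ^ 2) ^ (β / 2) =
      ‖F x‖ * (1 + ‖x‖ ^ 2) ^ (m / 2) * (1 + ‖x‖ ^ 2) ^ ((β - m) / 2) := by
  rw [mul_assoc, ← Real.rpow_add (by positivity)]
  congr 2
  ring

variable [MeasurableSpace E] [BorelSpace E] {μ : Measure E} {m β : ℝ}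

lemma memLp_two_norm_mul_one_add_norm_sq_rpow (hF : AEStronglyMeasurable F μ)
    (hFm : Integrable (fun x => (1 + ‖x‖ ^ 2) ^ m * ‖F x‖ ^ 2) μ) :
    MemLp (fun x => ‖F x‖ * (1 + ‖x‖ ^ 2) ^ (m / 2)) 2 μ := by
  have hmeas : Measurable fun x : E => (1 + ‖x‖ ^ 2) ^ (m / 2) := by fun_prop
  refine (memLp_two_iff_integrable_sq (hF.norm.mul hmeas.aestronglyMeasurable)).2 ?_
  refine hFm.congr ?_
  filter_upwards with x
  rw [Pi.mul_apply, mul_pow, ← Real.rpow_mul_natCast (by positivity), Nat.cast_ofNat,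
    div_mul_cancel₀ _ two_ne_zero, mul_comm]

variable [NormedSpace ℝ E] [FiniteDimensional ℝ E] [μ.IsAddHaarMeasure]

lemma memLp_two_one_add_norm_sq_rpow (hβ : β < m - Module.finrank ℝ E / 2) :
    MemLp (fun x : E => (1 + ‖x‖ ^ 2) ^ ((β - m) / 2)) 2 μ := by
  have hmeas : Measurable fun x : E => (1 + ‖x‖ ^ 2) ^ ((β - m) / 2) := by fun_prop
  refine (memLp_two_iff_integrable_sq hmeas.aestronglyMeasurable).2 ?_
  refine (integrable_rpow_neg_one_add_norm_sq (μ := μ) (r := 2 * (m - β)) (by linarith)).congr ?_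
  filter_upwards with x
  rw [← Real.rpow_mul_natCast (by positivity)]
  congr 1
  push_cast
  ring

theorem integrable_norm_mul_one_add_norm_sq_rpow (hβ : β < m - Module.finrank ℝ E / 2)
    (hF : AEStronglyMeasurable F μ)
    (hFm : Integrable (fun x => (1 + ‖x‖ ^ 2) ^ m * ‖F x‖ ^ 2) μ) :
    Integrable (fun x => ‖F x‖ * (1 + ‖x‖ ^ 2) ^ (β / 2)) μ := by
  simp only [norm_mul_one_add_norm_sq_rpow_eq m β]
  exact (memLp_two_norm_mul_one_add_norm_sq_rpow hF hFm).integrable_mul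
    (memLp_two_one_add_norm_sq_rpow hβ)

theorem integral_norm_mul_one_add_norm_sq_rpow_le (hβ : β < m - Module.finrank ℝ E / 2)
    (hF : AEStronglyMeasurable F μ)
    (hFm : Integrable (fun x => (1 + ‖x‖ ^ 2) ^ m * ‖F x‖ ^ 2) μ) :
    ∫ x, ‖F x‖ * (1 + ‖x‖ ^ 2) ^ (β / 2) ∂μ ≤
      √(∫ x, (1 + ‖x‖ ^ 2) ^ m * ‖F x‖ ^ 2 ∂μ) * √(∫ x, (1 + ‖x‖ ^ 2) ^ (β - m) ∂μ) := by
  have hsq (a : ℝ) (x : E) : ((1 + ‖x‖ ^ 2) ^ (a / 2)) ^ (2 : ℝ) = (1 + ‖x‖ ^ 2) ^ a := by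
    rw [← Real.rpow_mul (by positivity), div_mul_cancel₀ _ two_ne_zero]
  have hFsq (x : E) : (‖F x‖ * (1 + ‖x‖ ^ 2) ^ (m / 2)) ^ (2 : ℝ) =
      (1 + ‖x‖ ^ 2) ^ m * ‖F x‖ ^ 2 := by
    rw [Real.mul_rpow (norm_nonneg _) (by positivity), hsq, Real.rpow_two, mul_comm]
  have cauchySchwarz := integral_mul_le_Lp_mul_Lq_of_nonneg (μ := μ)
    (f := fun x => ‖F x‖ * (1 + ‖x‖ ^ 2) ^ (m / 2)) (g := fun x => (1 + ‖x‖ ^ 2) ^ ((β - m) / 2))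
    Real.HolderConjugate.two_two
    (.of_forall fun x => by positivity) (.of_forall fun x => by positivity)
    (by simpa using memLp_two_norm_mul_one_add_norm_sq_rpow hF hFm)
    (by simpa using memLp_two_one_add_norm_sq_rpow hβ)
  simp only [hsq, hFsq, ← norm_mul_one_add_norm_sq_rpow_eq, ← Real.sqrt_eq_rpow] at cauchySchwarz
  exact cauchySchwarz

end JapaneseBracket

section Sobolev

variable {H : Type*} [NormedAddCommGroup H] [NormedSpace ℂ H]

/-- The Fourier transform `∫ e^{-isμ} f(μ) dμ` in the angular frequency `s`, without the factor
`2π` that Mathlib puts into the exponent. -/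
noncomputable def angularFourier (f : ℝ → H) (s : ℝ) : H :=
  𝓕 f (s / (2 * π))

lemma angularFourier_eq_integral (f : ℝ → H) (s : ℝ) :
    angularFourier f s = ∫ μ : ℝ, Complex.exp (-(Complex.I * s * μ)) • f μ := by
  rw [angularFourier, Real.fourier_real_eq_integral_exp_smul]
  congr! 3 with μ
  have hπ : (π : ℂ) ≠ 0 := Complex.ofReal_ne_zero.2 Real.pi_ne_zero
  push_cast
  field_simp

lemma angularFourier_coe (f : 𝓢(ℝ, H)) (s : ℝ) : angularFourier f s = 𝓕 f (s / (2 * π)) :=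
  rfl

lemma continuous_angularFourier (f : 𝓢(ℝ, H)) : Continuous (angularFourier f) :=
  (𝓕 f).continuous.comp (continuous_id.div_const _)

lemma angularFourier_derivCLM (f : 𝓢(ℝ, H)) (s : ℝ) :
    angularFourier (SchwartzMap.derivCLM ℂ H f) s = (Complex.I * s) • angularFourier f s := by
  have hπ : (π : ℂ) ≠ 0 := Complex.ofReal_ne_zero.2 Real.pi_ne_zero
  refine (congrFun (Real.fourier_deriv f.integrable f.differentiable
    (SchwartzMap.derivCLM ℂ H f).integrable) (s / (2 * π))).trans ?_
  rw [angularFourier]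
  push_cast
  field_simp

/-- The square of the Sobolev `H^k` norm of `f`, computed on the frequency side. The angular
frequency is not rescaled, so that for `k = 0` it is `2π` times the squared `L²` norm of `f`. -/
noncomputable def sobolevNormSq (k : ℕ) (f : 𝓢(ℝ, H)) : ℝ :=
  ∫ s : ℝ, (1 + s ^ 2) ^ k * ‖angularFourier f s‖ ^ 2

lemma one_add_sq_pow_succ_mul_norm_angularFourier_sq (k : ℕ) (f : 𝓢(ℝ, H)) (s : ℝ) :
    (1 + s ^ 2) ^ (k + 1) * ‖angularFourier f s‖ ^ 2 =
      (1 + s ^ 2) ^ k * ‖angularFourier f s‖ ^ 2 +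
        (1 + s ^ 2) ^ k * ‖angularFourier (SchwartzMap.derivCLM ℂ H f) s‖ ^ 2 := by
  have hderiv : ‖angularFourier (SchwartzMap.derivCLM ℂ H f) s‖ ^ 2 =
      s ^ 2 * ‖angularFourier f s‖ ^ 2 := by
    rw [angularFourier_derivCLM, norm_smul, norm_mul, Complex.norm_I, one_mul, Complex.norm_real,
      mul_pow, Real.norm_eq_abs, sq_abs]
  rw [hderiv]
  ring

lemma integrable_one_add_sq_pow_mul_norm_angularFourier_sq (k : ℕ) (f : 𝓢(ℝ, H)) :
    Integrable fun s : ℝ => (1 + s ^ 2) ^ k * ‖angularFourier f s‖ ^ 2 := by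
  induction k generalizing f with
  | zero =>
    simp only [pow_zero, one_mul, angularFourier_coe]
    exact (((𝓕 f).memLp 2 volume).integrable_norm_pow two_ne_zero).comp_div (by positivity)
  | succ k ih =>
    simp only [one_add_sq_pow_succ_mul_norm_angularFourier_sq]
    exact (ih f).add (ih _)

lemma sobolevNormSq_succ (k : ℕ) (f : 𝓢(ℝ, H)) :
    sobolevNormSq (k + 1) f = sobolevNormSq k f + sobolevNormSq k (SchwartzMap.derivCLM ℂ H f) := by
  simp only [sobolevNormSq, one_add_sq_pow_succ_mul_norm_angularFourier_sq]
  exact integral_add (integrable_one_add_sq_pow_mul_norm_angularFourier_sq k _)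
    (integrable_one_add_sq_pow_mul_norm_angularFourier_sq k _)

lemma sobolevNormSq_zero {H : Type*} [NormedAddCommGroup H] [InnerProductSpace ℂ H]
    [CompleteSpace H] (f : 𝓢(ℝ, H)) :
    sobolevNormSq 0 f = 2 * π * ∫ μ, ‖f μ‖ ^ 2 := by
  simp only [sobolevNormSq, pow_zero, one_mul, angularFourier_coe]
  rw [Measure.integral_comp_div fun ξ : ℝ => ‖𝓕 f ξ‖ ^ 2, SchwartzMap.integral_norm_sq_fourier,
    abs_of_pos Real.two_pi_pos, smul_eq_mul]

lemma sobolevNormSq_smul (k : ℕ) (c : ℂ) (f : 𝓢(ℝ, H)) :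
    sobolevNormSq k (c • f) = ‖c‖ ^ 2 * sobolevNormSq k f := by
  simp only [sobolevNormSq, angularFourier_coe, ← integral_const_mul]
  congr! 2
  rw [FourierTransform.fourier_smul, smul_apply, norm_smul]
  ring

lemma sobolevNormSq_add_le (k : ℕ) (f g : 𝓢(ℝ, H)) :
    sobolevNormSq k (f + g) ≤ 2 * (sobolevNormSq k f + sobolevNormSq k g) := by
  have hf := integrable_one_add_sq_pow_mul_norm_angularFourier_sq k f
  have hg := integrable_one_add_sq_pow_mul_norm_angularFourier_sq k g
  rw [sobolevNormSq, sobolevNormSq, sobolevNormSq, ← integral_add hf hg, ← integral_const_mul]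
  refine integral_mono (integrable_one_add_sq_pow_mul_norm_angularFourier_sq k _)
    ((hf.add hg).const_mul 2) fun s => ?_
  have hsum : ‖angularFourier (f + g : 𝓢(ℝ, H)) s‖ ^ 2 ≤
      2 * (‖angularFourier f s‖ ^ 2 + ‖angularFourier g s‖ ^ 2) := by
    simp only [angularFourier_coe, FourierTransform.fourier_add, add_apply]
    exact (pow_le_pow_left₀ (norm_nonneg _) (norm_add_le _ _) 2).trans add_sq_le
  calc (1 + s ^ 2) ^ k * ‖angularFourier (f + g : 𝓢(ℝ, H)) s‖ ^ 2
      ≤ (1 + s ^ 2) ^ k * (2 * (‖angularFourier f s‖ ^ 2 + ‖angularFourier g s‖ ^ 2)) := by gcongr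
    _ = _ := by ring

theorem integrable_norm_angularFourier_mul_one_add_sq_rpow {m : ℕ} {β : ℝ} (hβ : β < m - 1 / 2)
    (f : 𝓢(ℝ, H)) :
    Integrable fun s : ℝ => ‖angularFourier f s‖ * (1 + s ^ 2) ^ (β / 2) := by
  have hβ' : β < (m : ℝ) - Module.finrank ℝ ℝ / 2 := by simpa using hβ
  simpa using integrable_norm_mul_one_add_norm_sq_rpow (μ := volume) hβ'
    (continuous_angularFourier f).aestronglyMeasurable
    (by simpa using integrable_one_add_sq_pow_mul_norm_angularFourier_sq m f)

theorem integral_norm_angularFourier_mul_one_add_sq_rpow_le {m : ℕ} {β : ℝ} (hβ : β < m - 1 / 2)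
    (f : 𝓢(ℝ, H)) :
    ∫ s : ℝ, ‖angularFourier f s‖ * (1 + s ^ 2) ^ (β / 2) ≤
      √(sobolevNormSq m f) * √(∫ s : ℝ, (1 + s ^ 2) ^ (β - m)) := by
  have hβ' : β < (m : ℝ) - Module.finrank ℝ ℝ / 2 := by simpa using hβ
  simpa [sobolevNormSq] using integral_norm_mul_one_add_norm_sq_rpow_le (μ := volume) hβ'
    (continuous_angularFourier f).aestronglyMeasurable
    (by simpa using integrable_one_add_sq_pow_mul_norm_angularFourier_sq m f)

end Sobolev

section OscillatoryAmplitude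

variable {H : Type*} [NormedAddCommGroup H] [NormedSpace ℂ H] {φ : ℝ → ℝ} {f : ℝ → H}

/-- The oscillatory function `e^{itφ} f` with phase `φ` and amplitude `f`, the object whose growth
in the parameter `t` is estimated. -/
noncomputable def modulate (φ : ℝ → ℝ) (f : ℝ → H) (t : ℝ) (μ : ℝ) : H :=
  Complex.exp (Complex.I * t * φ μ) • f μ

lemma norm_modulate (φ : ℝ → ℝ) (f : ℝ → H) (t μ : ℝ) : ‖modulate φ f t μ‖ = ‖f μ‖ := by
  have hexp : Complex.I * t * φ μ = (t * φ μ : ℝ) * Complex.I := by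
    push_cast
    ring
  rw [modulate, norm_smul, hexp, Complex.norm_exp_ofReal_mul_I, one_mul]

/-- Test functions `f` which are admissible as amplitudes for the phase `φ`: the phase only has to
be smooth near the support of `f`. -/
structure IsAmplitude (φ : ℝ → ℝ) (f : ℝ → H) : Prop where
  contDiff : ContDiff ℝ ∞ f
  hasCompactSupport : HasCompactSupport f
  contDiffAt_phase : ∀ x ∈ tsupport f, ContDiffAt ℝ ∞ φ x

namespace IsAmplitude

protected lemma deriv (h : IsAmplitude φ f) : IsAmplitude φ (deriv f) where
  contDiff := (contDiff_infty_iff_deriv.1 h.contDiff).2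
  hasCompactSupport := h.hasCompactSupport.deriv
  contDiffAt_phase x hx := h.contDiffAt_phase x (tsupport_deriv_subset hx)

lemma smul {𝕜 : Type*} [NormedField 𝕜] [NormedAlgebra ℝ 𝕜] [NormedSpace 𝕜 H]
    [IsScalarTower ℝ 𝕜 H] (h : IsAmplitude φ f) {c : ℝ → 𝕜}
    (hc : ∀ x ∈ tsupport f, ContDiffAt ℝ ∞ c x) : IsAmplitude φ fun x => c x • f x where
  contDiff := contMDiff_iff_contDiff.1 <| contMDiff_of_tsupport fun x hx =>
    ((hc x (tsupport_smul_subset_right c f hx)).smul h.contDiff.contDiffAt).contMDiffAt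
  hasCompactSupport := h.hasCompactSupport.smul_left
  contDiffAt_phase x hx := h.contDiffAt_phase x (tsupport_smul_subset_right c f hx)

lemma deriv_phase_smul (h : IsAmplitude φ f) : IsAmplitude φ fun x => deriv φ x • f x :=
  h.smul fun x hx => (h.contDiffAt_phase x hx).derivWithin le_rfl

protected lemma modulate (h : IsAmplitude φ f) (t : ℝ) : IsAmplitude φ (modulate φ f t) :=
  h.smul fun x hx => (contDiffAt_const.mul
    (Complex.ofRealCLM.contDiff.contDiffAt.comp x (h.contDiffAt_phase x hx))).cexp

lemma deriv_modulate (h : IsAmplitude φ f) (t μ : ℝ) :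
    deriv (modulate φ f t) μ = modulate φ (deriv f) t μ +
      (Complex.I * t) • modulate φ (fun x => deriv φ x • f x) t μ := by
  by_cases hμ : μ ∈ tsupport f
  · have hφ : HasDerivAt φ (deriv φ μ) μ :=
      ((h.contDiffAt_phase μ hμ).differentiableAt (by simp)).hasDerivAt
    have hf : HasDerivAt f (deriv f μ) μ :=
      (h.contDiff.differentiable (by simp) μ).hasDerivAt
    have hexp := (hφ.ofReal_comp.const_mul (Complex.I * t)).cexp
    refine (hexp.smul hf).deriv.trans ?_
    simp only [modulate, ← Complex.coe_smul, smul_smul]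
    congr 2
    ring
  · have hmod : μ ∉ tsupport (modulate φ f t) := fun hμ' =>
      hμ (tsupport_smul_subset_right (fun x : ℝ => Complex.exp (Complex.I * t * φ x)) f hμ')
    rw [deriv_of_notMem_tsupport hmod, modulate, modulate,
      deriv_of_notMem_tsupport hμ, image_eq_zero_of_notMem_tsupport hμ]
    simp only [smul_zero, add_zero]

/-- The oscillatory function `e^{itφ} f` as a Schwartz function. -/
noncomputable def toSchwartzMap (h : IsAmplitude φ f) (t : ℝ) : 𝓢(ℝ, H) :=
  (h.modulate t).hasCompactSupport.toSchwartzMap (h.modulate t).contDiff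

lemma coe_toSchwartzMap (h : IsAmplitude φ f) (t : ℝ) :
    h.toSchwartzMap t = modulate φ f t :=
  rfl

lemma derivCLM_toSchwartzMap (h : IsAmplitude φ f) (t : ℝ) :
    SchwartzMap.derivCLM ℂ H (h.toSchwartzMap t) =
      h.deriv.toSchwartzMap t + (Complex.I * t) • h.deriv_phase_smul.toSchwartzMap t :=
  SchwartzMap.ext fun μ => h.deriv_modulate t μ

theorem exists_sobolevNormSq_toSchwartzMap_le {H : Type*} [NormedAddCommGroup H]
    [InnerProductSpace ℂ H] [CompleteSpace H] {f : ℝ → H} (k : ℕ) (h : IsAmplitude φ f) :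
    ∃ C : ℝ, 0 ≤ C ∧ ∀ t, sobolevNormSq k (h.toSchwartzMap t) ≤ C * (1 + t ^ 2) ^ k := by
  induction k generalizing f with
  | zero =>
    refine ⟨2 * π * ∫ μ, ‖f μ‖ ^ 2, by positivity, fun t => ?_⟩
    simp only [sobolevNormSq_zero, coe_toSchwartzMap, norm_modulate, pow_zero, mul_one, le_refl]
  | succ k ih =>
    obtain ⟨A, hA, hfA⟩ := ih h
    obtain ⟨B, hB, hfB⟩ := ih h.deriv
    obtain ⟨C, hC, hfC⟩ := ih h.deriv_phase_smul
    refine ⟨A + 2 * B + 2 * C, by positivity, fun t => ?_⟩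
    have hIt : ‖Complex.I * t‖ ^ 2 = t ^ 2 := by simp
    calc sobolevNormSq (k + 1) (h.toSchwartzMap t)
        ≤ sobolevNormSq k (h.toSchwartzMap t) + 2 * (sobolevNormSq k (h.deriv.toSchwartzMap t) +
            t ^ 2 * sobolevNormSq k (h.deriv_phase_smul.toSchwartzMap t)) := by
          rw [sobolevNormSq_succ, derivCLM_toSchwartzMap, ← hIt, ← sobolevNormSq_smul]
          gcongr
          exact sobolevNormSq_add_le k _ _
      _ ≤ A * (1 + t ^ 2) ^ k + 2 * (B * (1 + t ^ 2) ^ k + t ^ 2 * (C * (1 + t ^ 2) ^ k)) := by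
          gcongr
          exacts [hfA t, hfB t, hfC t]
      _ = (A + 2 * B + 2 * C * t ^ 2) * (1 + t ^ 2) ^ k := by ring
      _ ≤ (A + 2 * B + 2 * C) * (1 + t ^ 2) * (1 + t ^ 2) ^ k := by
          gcongr
          nlinarith [mul_nonneg hA (sq_nonneg t), mul_nonneg hB (sq_nonneg t)]
      _ = (A + 2 * B + 2 * C) * (1 + t ^ 2) ^ (k + 1) := by ring

end IsAmplitude

theorem weighted_fourier_bound_general {H : Type*} [NormedAddCommGroup H] [InnerProductSpace ℂ H]
    [CompleteSpace H] {f : ℝ → H} (m : ℕ) (h : IsAmplitude φ f) {β : ℝ} (hβ : β < m - 1 / 2) :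
    ∃ C > (0 : ℝ), ∀ t : ℝ,
      Integrable (fun s : ℝ => ‖angularFourier (modulate φ f t) s‖ * (1 + s ^ 2) ^ (β / 2)) ∧
      ∫ s : ℝ, ‖angularFourier (modulate φ f t) s‖ * (1 + s ^ 2) ^ (β / 2) ≤
        C * (1 + t ^ 2) ^ ((m : ℝ) / 2) := by
  obtain ⟨C, hC, hbound⟩ := h.exists_sobolevNormSq_toSchwartzMap_le m
  set J := ∫ s : ℝ, (1 + s ^ 2) ^ (β - m)
  refine ⟨√C * √J + 1, by positivity, fun t =>
    ⟨integrable_norm_angularFourier_mul_one_add_sq_rpow hβ (h.toSchwartzMap t), ?_⟩⟩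
  have hsqrt : √((1 + t ^ 2) ^ m) = (1 + t ^ 2) ^ ((m : ℝ) / 2) := by
    rw [Real.sqrt_eq_rpow, ← Real.rpow_natCast_mul (by positivity), mul_one_div]
  calc ∫ s : ℝ, ‖angularFourier (modulate φ f t) s‖ * (1 + s ^ 2) ^ (β / 2)
      ≤ √(sobolevNormSq m (h.toSchwartzMap t)) * √J :=
        integral_norm_angularFourier_mul_one_add_sq_rpow_le hβ (h.toSchwartzMap t)
    _ ≤ √(C * (1 + t ^ 2) ^ m) * √J := by
        gcongr
        exact hbound t
    _ = √C * √J * (1 + t ^ 2) ^ ((m : ℝ) / 2) := by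
        rw [Real.sqrt_mul hC, hsqrt]
        ring
    _ ≤ (√C * √J + 1) * (1 + t ^ 2) ^ ((m : ℝ) / 2) := by
        gcongr
        exact le_add_of_nonneg_right zero_le_one

end OscillatoryAmplitude

lemma gtfun_eq_modulate (M : ℝ) (g : ℝ → ℂ) (t : ℝ) :
    gtfun M g t = modulate (fun μ => M - 1 / μ) g t := by
  ext μ
  simp only [gtfun, modulate, smul_eq_mul, Complex.ofReal_sub, Complex.ofReal_div,
    Complex.ofReal_one]

lemma gtHat_eq_angularFourier (M : ℝ) (g : ℝ → ℂ) (t s : ℝ) :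
    gtHat M g t s = angularFourier (modulate (fun μ => M - 1 / μ) g t) s := by
  rw [angularFourier_eq_integral, ← gtfun_eq_modulate]
  rfl

lemma isAmplitude_sub_one_div {H : Type*} [NormedAddCommGroup H] [NormedSpace ℂ H]
    {g : ℝ → H} (hg : ContDiff ℝ ∞ g) (hgc : HasCompactSupport g) (hg0 : 0 ∉ tsupport g) (M : ℝ) :
    IsAmplitude (fun μ => M - 1 / μ) g where
  contDiff := hg
  hasCompactSupport := hgc
  contDiffAt_phase _ hx :=
    contDiffAt_const.sub (contDiffAt_const.div contDiffAt_id (ne_of_mem_of_not_mem hx hg0))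

/-- let `g` be smooth and compactly supported in `(0,∞)`. For every
`0 ≤ β < m - 1/2` there is `C > 0`, depending on `g`, `m`, `β`, `M`, such that for all `t ∈ ℝ`,
`∫_ℝ |ĝ_t(s)| ⟨s⟩^β ds ≤ C ⟨t⟩^m`. -/
theorem weighted_fourier_bound (m : ℕ) (hm : 1 ≤ m) (M : ℝ) (g : ℝ → ℂ)
    (hg : ContDiff ℝ (⊤ : ℕ∞) g) (hgc : HasCompactSupport g) (hgs : tsupport g ⊆ Set.Ioi 0) :
    ∀ β : ℝ, 0 ≤ β → β < (m : ℝ) - 1 / 2 →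
      ∃ C > (0 : ℝ), ∀ t : ℝ,
        ∫ s : ℝ, ‖gtHat M g t s‖ * (1 + s ^ 2) ^ (β / 2) ≤ C * (1 + t ^ 2) ^ ((m : ℝ) / 2) := by
  intro β _ hβ
  obtain ⟨C, hC, hbound⟩ := weighted_fourier_bound_general m
    (isAmplitude_sub_one_div hg hgc (fun h0 => lt_irrefl (0 : ℝ) (hgs h0)) M) hβ
  exact ⟨C, hC, fun t => by simpa only [gtHat_eq_angularFourier] using (hbound t).2⟩
end
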